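/- Let n₀,n₁,n₂,n₃ ∈ ℂ and let p(τ) be a holomorphic function on an open connected subset V ⊆ ℍ such that for every τ ∈ V one has 2p(τ) ∉ Λ_τ and p(τ) + ω_k/2 ∉ Λ_τ for k = 0,1,2,3, and such that p satisfies the elliptic form of Painlevé VI with parameters α_k = (1/2)(n_k + 1/2)², i.e. d²p/dτ² = (−1/(4π²)) Σ_{k=0}^{3} (1/2)(n_k + 1/2)² ℘′(p(τ) + ω_k/2 | τ). Define A(τ) = 2πi p′(τ) + (1/2)(ζ(2p(τ)|τ) − 2p(τ)η₁(τ)). Then (p(τ), A(τ)) satisfies the Hamiltonian system on V. -/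

import Mathlib

open Complex Filter Topology Asymptotics

noncomputable section

/-- membership in the lattice `Λ_τ = ℤ + τℤ`. -/
def InLattice (τ z : ℂ) : Prop := ∃ m n : ℤ, z = (m : ℂ) + (n : ℂ) * τ

/-- the half-period generators `ω₀ = 0, ω₁ = 1, ω₂ = τ, ω₃ = 1 + τ`. -/
def halfp (τ : ℂ) : Fin 4 → ℂ := ![0, 1, τ, 1 + τ]

/-- the Weierstrass elliptic function `℘(z|τ)`. -/
def wp (τ z : ℂ) : ℂ :=
  z⁻¹ ^ 2 + ∑' w : {w : ℤ × ℤ // w ≠ 0},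
    ((z - ((w.1.1 : ℂ) + (w.1.2 : ℂ) * τ))⁻¹ ^ 2 - ((w.1.1 : ℂ) + (w.1.2 : ℂ) * τ)⁻¹ ^ 2)

/-- `℘′(z|τ)`, the `z`-derivative of `℘`. -/
def wpd (τ z : ℂ) : ℂ := deriv (wp τ) z

/-- `℘″(z|τ)`. -/
def wpdd (τ z : ℂ) : ℂ := deriv (wpd τ) z

def e1 (τ : ℂ) : ℂ := wp τ (1 / 2)
def e2 (τ : ℂ) : ℂ := wp τ (τ / 2)
def e3 (τ : ℂ) : ℂ := wp τ ((1 + τ) / 2)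

def g2 (τ : ℂ) : ℂ := -4 * (e1 τ * e2 τ + e1 τ * e3 τ + e2 τ * e3 τ)

/-- `zeta` is the Weierstrass zeta function: for each `τ ∈ ℍ`, `zeta τ` is odd, satisfies
`∂ζ/∂z = -℘` off the lattice, and `ζ(z|τ) - 1/z → 0` as `z → 0`. -/
def IsWeierstrassZeta (zeta : ℂ → ℂ → ℂ) : Prop :=
  ∀ τ : ℂ, 0 < τ.im →
    (∀ z : ℂ, zeta τ (-z) = - zeta τ z) ∧
    (∀ z : ℂ, ¬ InLattice τ z → HasDerivAt (zeta τ) (- wp τ z) z) ∧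
    Tendsto (fun z => zeta τ z - z⁻¹) (𝓝[≠] (0 : ℂ)) (𝓝 0)

/-- `eta1 τ = ζ(z+1|τ) - ζ(z|τ)` is the first quasi-period. -/
def IsEta1 (zeta : ℂ → ℂ → ℂ) (eta1 : ℂ → ℂ) : Prop :=
  ∀ τ : ℂ, 0 < τ.im → ∀ z : ℂ, ¬ InLattice τ z →
    eta1 τ = zeta τ (z + 1) - zeta τ z

/-- `eta2 τ = ζ(z+τ|τ) - ζ(z|τ)` is the second quasi-period. -/
def IsEta2 (zeta : ℂ → ℂ → ℂ) (eta2 : ℂ → ℂ) : Prop :=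
  ∀ τ : ℂ, 0 < τ.im → ∀ z : ℂ, ¬ InLattice τ z →
    eta2 τ = zeta τ (z + τ) - zeta τ z

/-- `sigma` is the Weierstrass sigma function: entire, odd, with
`∂/∂z log σ = ζ` off the lattice and `σ(z|τ)/z → 1` as `z → 0`. -/
def IsWeierstrassSigma (zeta sigma : ℂ → ℂ → ℂ) : Prop :=
  ∀ τ : ℂ, 0 < τ.im →
    (∀ z : ℂ, sigma τ (-z) = - sigma τ z) ∧
    Differentiable ℂ (sigma τ) ∧
    (∀ z : ℂ, ¬ InLattice τ z → HasDerivAt (sigma τ) (zeta τ z * sigma τ z) z) ∧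
    Tendsto (fun z => sigma τ z / z) (𝓝[≠] (0 : ℂ)) (𝓝 1)

/-- the Hamiltonian system (142) for `(p(τ), A(τ))` on `V`. -/
def HamSystem (n : Fin 4 → ℂ) (zeta : ℂ → ℂ → ℂ) (eta1 : ℂ → ℂ)
    (V : Set ℂ) (p A : ℂ → ℂ) : Prop :=
  ∀ τ ∈ V,
    HasDerivAt p ((-Complex.I / (4 * (Real.pi : ℂ))) *
      (2 * A τ - zeta τ (2 * p τ) + 2 * p τ * eta1 τ)) τ ∧
    HasDerivAt A ((Complex.I / (4 * (Real.pi : ℂ))) *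
      ((2 * wp τ (2 * p τ) + 2 * eta1 τ) * A τ - (3 / 2) * wpd τ (2 * p τ)
        - ∑ k : Fin 4, n k * (n k + 1) * wpd τ (p τ + halfp τ k / 2))) τ

/-- the generalized Lamé potential `I(z;τ)`. -/
def Ipot (n : Fin 4 → ℂ) (zeta : ℂ → ℂ → ℂ) (A B p τ z : ℂ) : ℂ :=
  (∑ k : Fin 4, n k * (n k + 1) * wp τ (z + halfp τ k / 2))
    + (3 / 4) * (wp τ (z + p) + wp τ (z - p))
    + A * (zeta τ (z + p) - zeta τ (z - p)) + B

end

noncomputable section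

/-- `π cot(πw)`, written in terms of `exp(2πiw)`. -/
def piCot (w : ℂ) : ℂ :=
  Real.pi * I * (exp (2 * Real.pi * I * w) + 1) / (exp (2 * Real.pi * I * w) - 1)

/-- The derivative `-π² / sin²(πw)` of `π cot(πw)`. -/
def piCotDeriv (w : ℂ) : ℂ :=
  4 * Real.pi ^ 2 * exp (2 * Real.pi * I * w) / (exp (2 * Real.pi * I * w) - 1) ^ 2

end

lemma two_pi_I_exp_eq_one_iff (w : ℂ) : exp (2 * Real.pi * I * w) = 1 ↔ ∃ m : ℤ, w = m := by
  rw [Complex.exp_eq_one_iff]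
  refine exists_congr fun m => ?_
  rw [mul_comm (m : ℂ)]
  exact mul_right_inj' Complex.two_pi_I_ne_zero

lemma two_pi_I_exp_add_one (w : ℂ) :
    exp (2 * Real.pi * I * (w + 1)) = exp (2 * Real.pi * I * w) := by
  rw [mul_add, mul_one, Complex.exp_add, Complex.exp_two_pi_mul_I, mul_one]

lemma norm_two_pi_I_exp (w : ℂ) :
    ‖exp (2 * Real.pi * I * w)‖ = Real.exp (-(2 * Real.pi * w.im)) := by
  rw [Complex.norm_exp]
  simp

lemma piCot_add_one (w : ℂ) : piCot (w + 1) = piCot w := by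
  simp only [piCot, two_pi_I_exp_add_one]

lemma piCotDeriv_add_one (w : ℂ) : piCotDeriv (w + 1) = piCotDeriv w := by
  simp only [piCotDeriv, two_pi_I_exp_add_one]

lemma piCot_neg (w : ℂ) : piCot (-w) = -piCot w := by
  simp only [piCot, mul_neg, Complex.exp_neg]
  have h0 := Complex.exp_ne_zero (2 * Real.pi * I * w)
  set e := exp (2 * Real.pi * I * w)
  by_cases h : e = 1
  · simp [h]
  · have h1 : e - 1 ≠ 0 := sub_ne_zero.2 h
    have h2 : 1 - e ≠ 0 := sub_ne_zero.2 (Ne.symm h)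
    have h3 : e⁻¹ - 1 ≠ 0 := by
      rw [show e⁻¹ - 1 = (1 - e) / e by field_simp]
      exact div_ne_zero h2 h0
    field_simp
    ring

lemma piCotDeriv_neg (w : ℂ) : piCotDeriv (-w) = piCotDeriv w := by
  simp only [piCotDeriv, mul_neg, Complex.exp_neg]
  have h0 := Complex.exp_ne_zero (2 * Real.pi * I * w)
  set e := exp (2 * Real.pi * I * w)
  by_cases h : e = 1
  · simp [h]
  · have h1 : e - 1 ≠ 0 := sub_ne_zero.2 h
    have h2 : 1 - e ≠ 0 := sub_ne_zero.2 (Ne.symm h)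
    have h3 : e⁻¹ - 1 ≠ 0 := by
      rw [show e⁻¹ - 1 = (1 - e) / e by field_simp]
      exact div_ne_zero h2 h0
    field_simp
    ring

lemma hasDerivAt_piCot {w : ℂ} (hw : ∀ m : ℤ, w ≠ m) : HasDerivAt piCot (piCotDeriv w) w := by
  have h1 : exp (2 * Real.pi * I * w) - 1 ≠ 0 := by
    rw [sub_ne_zero, Ne, two_pi_I_exp_eq_one_iff]
    simpa using hw
  have he : HasDerivAt (fun w : ℂ => exp (2 * Real.pi * I * w))
      (exp (2 * Real.pi * I * w) * (2 * Real.pi * I * 1)) w :=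
    ((hasDerivAt_id w).const_mul (2 * Real.pi * I)).cexp
  have := ((he.add_const 1).const_mul (Real.pi * I : ℂ)).div (he.sub_const 1) h1
  refine this.congr_deriv ?_
  rw [piCotDeriv]
  congr 1
  linear_combination 4 * (Real.pi : ℂ) ^ 2 * exp (2 * Real.pi * I * w) * (-Complex.I_sq)

lemma differentiableAt_piCotDeriv {w : ℂ} (hw : ∀ m : ℤ, w ≠ m) :
    DifferentiableAt ℂ piCotDeriv w := by
  have h1 : (exp (2 * Real.pi * I * w) - 1) ^ 2 ≠ 0 := by
    refine pow_ne_zero _ ?_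
    rw [sub_ne_zero, Ne, two_pi_I_exp_eq_one_iff]
    simpa using hw
  unfold piCotDeriv
  fun_prop (disch := exact h1)

lemma one_half_le_norm_two_pi_I_exp_sub_one {w : ℂ} (hw : 1 ≤ w.im) :
    1 / 2 ≤ ‖exp (2 * Real.pi * I * w) - 1‖ := by
  have h : ‖exp (2 * Real.pi * I * w)‖ ≤ 1 / 2 := by
    rw [norm_two_pi_I_exp, Real.exp_neg, one_div]
    refine inv_anti₀ (by norm_num) ?_
    have := Real.add_one_le_exp (2 * Real.pi * w.im)
    nlinarith [Real.pi_gt_three]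
  have := norm_sub_norm_le (1 : ℂ) (exp (2 * Real.pi * I * w))
  rw [norm_sub_rev, norm_one] at this
  linarith

lemma norm_piCot_add_pi_I_le {w : ℂ} (hw : 1 ≤ w.im) :
    ‖piCot w + Real.pi * I‖ ≤ 4 * Real.pi * Real.exp (-(2 * Real.pi * w.im)) := by
  have h := one_half_le_norm_two_pi_I_exp_sub_one hw
  have h1 : exp (2 * Real.pi * I * w) - 1 ≠ 0 := norm_pos_iff.1 (by linarith)
  have : piCot w + Real.pi * I =
      2 * Real.pi * I * exp (2 * Real.pi * I * w) / (exp (2 * Real.pi * I * w) - 1) := by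
    rw [piCot, eq_div_iff h1, add_mul, div_mul_cancel₀ _ h1]
    ring
  rw [this, norm_div, norm_mul, norm_two_pi_I_exp, div_le_iff₀ (by linarith)]
  have h2 : ‖(2 * Real.pi * I : ℂ)‖ = 2 * Real.pi := by
    simp [abs_of_pos Real.pi_pos]
  rw [h2]
  have := mul_pos Real.pi_pos (Real.exp_pos (-(2 * Real.pi * w.im)))
  nlinarith

lemma norm_piCotDeriv_le_of_one_le_im {w : ℂ} (hw : 1 ≤ w.im) :
    ‖piCotDeriv w‖ ≤ 16 * Real.pi ^ 2 * Real.exp (-(2 * Real.pi * w.im)) := by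
  have h := one_half_le_norm_two_pi_I_exp_sub_one hw
  rw [piCotDeriv, norm_div, norm_mul, norm_two_pi_I_exp, norm_pow,
    div_le_iff₀ (by positivity)]
  have h2 : ‖(4 * Real.pi ^ 2 : ℂ)‖ = 4 * Real.pi ^ 2 := by
    simp
  rw [h2]
  have h3 : 1 / 4 ≤ ‖exp (2 * Real.pi * I * w) - 1‖ ^ 2 := by nlinarith
  have := mul_pos (pow_pos Real.pi_pos 2) (Real.exp_pos (-(2 * Real.pi * w.im)))
  nlinarith

/-- Near `0`, `π cot(πw) - 1/w` extends analytically. -/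
lemma exists_analyticAt_piCot :
    ∃ h : ℂ → ℂ, AnalyticAt ℂ h 0 ∧ ∀ᶠ w in 𝓝[≠] (0 : ℂ), piCot w = w⁻¹ + h w := by
  have hd {f : ℂ → ℂ} (hf : AnalyticAt ℂ f 0) : AnalyticAt ℂ (dslope f 0) 0 := by
    obtain ⟨q, hq⟩ := hf
    exact hq.has_fpower_series_dslope_fslope.analyticAt
  set E : ℂ → ℂ := fun w => exp (2 * Real.pi * I * w) with hE
  have hEd : Differentiable ℂ E := by
    intro w; simp only [hE]; fun_prop
  have hEa : AnalyticAt ℂ E 0 := hEd.analyticAt 0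
  have hE0 : E 0 = 1 := by simp [hE]
  have hE' : HasDerivAt E (2 * Real.pi * I) 0 := by
    have := ((hasDerivAt_id (0 : ℂ)).const_mul (2 * Real.pi * I)).cexp
    simpa using this
  have hs0 : dslope E 0 0 = 2 * Real.pi * I := by rw [dslope_same, hE'.deriv]
  have hne : dslope E 0 0 ≠ 0 := by rw [hs0]; exact Complex.two_pi_I_ne_zero
  set N : ℂ → ℂ := fun w => Real.pi * I * (E w + 1) / dslope E 0 w with hN
  have hNa : AnalyticAt ℂ N 0 :=
    ((analyticAt_const.mul (hEa.add analyticAt_const))).div (hd hEa) hne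
  have hN0 : N 0 = 1 := by
    simp only [hN, hs0, hE0]
    have := Complex.two_pi_I_ne_zero
    rw [div_eq_one_iff_eq this]; ring
  refine ⟨dslope N 0, hd hNa, ?_⟩
  filter_upwards [self_mem_nhdsWithin,
    nhdsWithin_le_nhds ((hd hEa).continuousAt.eventually_ne hne)] with w hw hw'
  have hw : w ≠ 0 := hw
  have e1 : N w = 1 + w * dslope N 0 w := by
    have := sub_smul_dslope N 0 w
    simp only [sub_zero, smul_eq_mul, hN0] at this
    rw [this]; ring
  have e2 : E w - 1 = w * dslope E 0 w := by
    have := sub_smul_dslope E 0 w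
    simp only [sub_zero, smul_eq_mul, hE0] at this
    exact this.symm
  have e3 : piCot w = N w / w := by
    change Real.pi * I * (E w + 1) / (E w - 1) = _
    rw [e2]
    simp only [hN]
    field_simp
  rw [e3, e1]
  field_simp

noncomputable section

/-- The pair of terms of index `±(n + 1)` in Eisenstein's series `∑ π cot(π(z + nτ))`. -/
def cotPair (n : ℕ) (x : ℂ × ℂ) : ℂ :=
  piCot (x.1 + (n + 1) * x.2) + piCot (x.1 - (n + 1) * x.2)

/-- Eisenstein's series `∑ π cot(π(z + nτ))` without the term of index zero. -/
def eisTail (x : ℂ × ℂ) : ℂ := ∑' n : ℕ, cotPair n x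

/-- Eisenstein's series `∑ π cot(π(z + nτ))`, summed symmetrically: the logarithmic
`z`-derivative of the odd theta function. -/
def eisCot (τ z : ℂ) : ℂ := piCot z + eisTail (z, τ)

/-- The `z`-derivative of `eisTail`. -/
def eisTailDz (x : ℂ × ℂ) : ℂ :=
  ∑' n : ℕ, (piCotDeriv (x.1 + (n + 1) * x.2) + piCotDeriv (x.1 - (n + 1) * x.2))

/-- The `τ`-derivative of `eisTail`. -/
def eisTailDtau (x : ℂ × ℂ) : ℂ :=
  ∑' n : ℕ, ((n + 1) * (piCotDeriv (x.1 + (n + 1) * x.2) - piCotDeriv (x.1 - (n + 1) * x.2)))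

end

lemma norm_piCot_sub_pi_I_le {w : ℂ} (hw : w.im ≤ -1) :
    ‖piCot w - Real.pi * I‖ ≤ 4 * Real.pi * Real.exp (2 * Real.pi * w.im) := by
  have := norm_piCot_add_pi_I_le (w := -w) (by simpa using by linarith)
  rw [piCot_neg, ← norm_neg] at this
  simpa [sub_eq_add_neg, add_comm] using this

lemma norm_piCotDeriv_le_of_im_le_neg_one {w : ℂ} (hw : w.im ≤ -1) :
    ‖piCotDeriv w‖ ≤ 16 * Real.pi ^ 2 * Real.exp (2 * Real.pi * w.im) := by
  have := norm_piCotDeriv_le_of_one_le_im (w := -w) (by simpa using by linarith)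
  rw [piCotDeriv_neg] at this
  simpa using this

/-- Uniform geometric control of the arguments `z ± (n + 1) τ` near a given point. -/
lemma exists_uniform_tail (x₀ : ℂ × ℂ) (h₀ : 0 < x₀.2.im) :
    ∃ U : Set (ℂ × ℂ), IsOpen U ∧ Convex ℝ U ∧ x₀ ∈ U ∧ ∃ (N : ℕ) (C r : ℝ), 0 < C ∧ 0 < r ∧
      r < 1 ∧ ∀ n : ℕ, N ≤ n → ∀ x ∈ U,
        1 ≤ (x.1 + (n + 1) * x.2).im ∧ (x.1 - (n + 1) * x.2).im ≤ -1 ∧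
        Real.exp (-(2 * Real.pi * (x.1 + (n + 1) * x.2).im)) ≤ C * r ^ n ∧
        Real.exp (2 * Real.pi * (x.1 - (n + 1) * x.2).im) ≤ C * r ^ n := by
  obtain ⟨δ, hδ, hδ'⟩ := exists_between h₀
  set R : ℝ := |x₀.1.im| + 1 with hR
  obtain ⟨N, hN⟩ := exists_nat_gt ((R + 1) / δ)
  rw [div_lt_iff₀ hδ] at hN
  refine ⟨{x | x.1.im < R} ∩ {x | -R < x.1.im} ∩ {x | δ < x.2.im}, ?_, ?_, ?_, N,
    Real.exp (2 * Real.pi * R), Real.exp (-(2 * Real.pi * δ)), Real.exp_pos _, Real.exp_pos _, ?_,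
    ?_⟩
  · refine ((isOpen_lt ?_ ?_).inter (isOpen_lt ?_ ?_)).inter (isOpen_lt ?_ ?_) <;>
      first | exact continuous_const | exact Complex.continuous_im.comp continuous_fst
            | exact Complex.continuous_im.comp continuous_snd
  · have l1 : IsLinearMap ℝ fun x : ℂ × ℂ => x.1.im :=
      ⟨fun x y => by simp, fun c x => by simp⟩
    have l2 : IsLinearMap ℝ fun x : ℂ × ℂ => x.2.im :=
      ⟨fun x y => by simp, fun c x => by simp⟩
    exact ((convex_halfSpace_lt l1 R).inter (convex_halfSpace_gt l1 (-R))).inter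
      (convex_halfSpace_gt l2 δ)
  · refine ⟨⟨?_, ?_⟩, hδ'⟩
    · change x₀.1.im < R
      have := le_abs_self x₀.1.im
      linarith
    · change -R < x₀.1.im
      have := neg_abs_le x₀.1.im
      linarith
  · rw [Real.exp_lt_one_iff]
    have := mul_pos Real.pi_pos hδ
    linarith
  · rintro n hn x ⟨⟨h1, h2⟩, h3⟩
    have h1 : x.1.im < R := h1
    have h2 : -R < x.1.im := h2
    have h3 : δ < x.2.im := h3
    have hn' : (N : ℝ) ≤ n := by exact_mod_cast hn
    have i1 : (((n : ℂ) + 1) * x.2).im = (n + 1) * x.2.im := by simp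
    have hnδ : (N : ℝ) * δ ≤ n * δ := mul_le_mul_of_nonneg_right hn' hδ.le
    have h4 : n * δ + δ ≤ (n + 1) * x.2.im := by
      have : (0 : ℝ) ≤ n := n.cast_nonneg
      nlinarith
    have e : Real.exp (2 * Real.pi * R) * Real.exp (-(2 * Real.pi * δ)) ^ n =
        Real.exp (-(2 * Real.pi * (n * δ - R))) := by
      rw [← Real.exp_nat_mul, ← Real.exp_add]
      congr 1; ring
    rw [Complex.add_im, Complex.sub_im, i1, e]
    have hp := Real.pi_pos
    refine ⟨by linarith, by linarith, ?_, ?_⟩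
    · refine Real.exp_le_exp.2 (neg_le_neg (mul_le_mul_of_nonneg_left ?_ (by positivity)))
      linarith
    · rw [← mul_neg]
      refine Real.exp_le_exp.2 (mul_le_mul_of_nonneg_left ?_ (by positivity))
      linarith

lemma summable_cotPair (x : ℂ × ℂ) (hx : 0 < x.2.im) : Summable fun n => cotPair n x := by
  obtain ⟨U, -, -, hxU, N, C, r, hC, hr, hr1, H⟩ := exists_uniform_tail x hx
  rw [← summable_nat_add_iff N]
  have hs : Summable fun n : ℕ => 8 * Real.pi * (C * r ^ (n + N)) :=
    (((summable_nat_add_iff N).2 (summable_geometric_of_lt_one hr.le hr1)).mul_left C).mul_left _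
  refine Summable.of_norm_bounded hs fun n => ?_
  obtain ⟨h1, h2, h3, h4⟩ := H (n + N) (by omega) x hxU
  have e : cotPair (n + N) x = (piCot (x.1 + ((n + N : ℕ) + 1) * x.2) + Real.pi * I) +
      (piCot (x.1 - ((n + N : ℕ) + 1) * x.2) - Real.pi * I) := by
    rw [cotPair]; ring
  rw [e]
  refine (norm_add_le _ _).trans ?_
  have a := norm_piCot_add_pi_I_le h1
  have b := norm_piCot_sub_pi_I_le h2
  have hp := Real.pi_pos
  nlinarith

/-- Differentiation of a series whose terms are controlled only beyond some index. -/
lemma hasFDerivAt_tsum_of_eventually_bound {E : Type*} [NormedAddCommGroup E] [NormedSpace ℂ E]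
    {f : ℕ → E → ℂ} {f' : ℕ → E → E →L[ℂ] ℂ} {u : ℕ → ℝ} {U : Set E} {x : E} {N : ℕ}
    (hu : Summable u) (hU : IsOpen U) (hU' : IsPreconnected U) (hx : x ∈ U)
    (hf : ∀ n, HasFDerivAt (f n) (f' n x) x)
    (hfU : ∀ n, N ≤ n → ∀ y ∈ U, HasFDerivAt (f n) (f' n y) y)
    (hbound : ∀ n, N ≤ n → ∀ y ∈ U, ‖f' n y‖ ≤ u n) (hsum : Summable fun n => f n x) :
    HasFDerivAt (fun y => ∑' n, f n y) (∑' n, f' n x) x ∧ Summable fun n => f' n x := by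
  have hu' : Summable fun n => u (n + N) := (summable_nat_add_iff N).2 hu
  have hsum' : Summable fun n => f (n + N) x :=
    (summable_nat_add_iff (f := fun n => f n x) N).2 hsum
  have hS : Summable fun n => f' n x := by
    rw [← summable_nat_add_iff N]
    exact Summable.of_norm_bounded hu' fun n => hbound _ (by omega) x hx
  refine ⟨?_, hS⟩
  have h1 := hasFDerivAt_tsum_of_isPreconnected (f := fun n => f (n + N))
    (f' := fun n => f' (n + N)) hu' hU hU' (fun n y hy => hfU _ (by omega) y hy)
    (fun n y hy => hbound _ (by omega) y hy) hx hsum' hx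
  have h2 : HasFDerivAt (fun y => ∑ n ∈ Finset.range N, f n y)
      (∑ n ∈ Finset.range N, f' n x) x := HasFDerivAt.fun_sum fun n _ => hf n
  have h3 := h2.add h1
  rw [hS.sum_add_tsum_nat_add] at h3
  refine h3.congr_of_eventuallyEq ?_
  filter_upwards [hU.mem_nhds hx] with y hy
  have hy' := summable_of_summable_hasFDerivAt_of_isPreconnected (f := fun n => f (n + N))
    (f' := fun n => f' (n + N)) hu' hU hU' (fun n y hy => hfU _ (by omega) y hy)
    (fun n y hy => hbound _ (by omega) y hy) hx hsum' hy
  exact (((summable_nat_add_iff (f := fun n => f n y) N).1 hy').sum_add_tsum_nat_add N).symm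

lemma summable_succ_mul_geometric {r : ℝ} (hr : 0 < r) (hr1 : r < 1) (C : ℝ) :
    Summable fun n : ℕ => C * (((n : ℝ) + 1) * r ^ n) := by
  refine Summable.mul_left _ ?_
  have h1 := summable_pow_mul_geometric_of_norm_lt_one 1 (r := r)
    (by rwa [Real.norm_of_nonneg hr.le])
  have h2 := summable_geometric_of_lt_one hr.le hr1
  refine (h1.add h2).congr fun n => ?_
  ring

/-- `z ± (n + 1) τ` is never an integer, so that no term of `eisTail` has a pole. -/
def TailRegular (x : ℂ × ℂ) : Prop :=
  ∀ n : ℕ, (∀ m : ℤ, x.1 + (n + 1) * x.2 ≠ m) ∧ ∀ m : ℤ, x.1 - (n + 1) * x.2 ≠ m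

lemma ne_intCast_of_im_ne_zero {w : ℂ} (hw : w.im ≠ 0) (m : ℤ) : w ≠ m := by
  rintro rfl
  simp at hw

lemma hasFDerivAt_eisTail {x : ℂ × ℂ} (hx : 0 < x.2.im) (hreg : TailRegular x) :
    HasFDerivAt eisTail (eisTailDz x • ContinuousLinearMap.fst ℂ ℂ ℂ +
      eisTailDtau x • ContinuousLinearMap.snd ℂ ℂ ℂ) x := by
  obtain ⟨U, hU, hUc, hxU, N, C, r, hC, hr, hr1, H⟩ := exists_uniform_tail x hx
  let P (n : ℕ) : ℂ × ℂ →L[ℂ] ℂ :=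
    ContinuousLinearMap.fst ℂ ℂ ℂ + ((n : ℂ) + 1) • ContinuousLinearMap.snd ℂ ℂ ℂ
  let M (n : ℕ) : ℂ × ℂ →L[ℂ] ℂ :=
    ContinuousLinearMap.fst ℂ ℂ ℂ - ((n : ℂ) + 1) • ContinuousLinearMap.snd ℂ ℂ ℂ
  let F' (n : ℕ) (y : ℂ × ℂ) : ℂ × ℂ →L[ℂ] ℂ :=
    piCotDeriv (y.1 + (n + 1) * y.2) • P n + piCotDeriv (y.1 - (n + 1) * y.2) • M n
  have hderiv (n : ℕ) (y : ℂ × ℂ) (hp : ∀ m : ℤ, y.1 + (n + 1) * y.2 ≠ m)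
      (hm : ∀ m : ℤ, y.1 - (n + 1) * y.2 ≠ m) : HasFDerivAt (cotPair n) (F' n y) y := by
    have h1 : HasFDerivAt (fun y : ℂ × ℂ => y.1 + (n + 1) * y.2) (P n) y := (P n).hasFDerivAt
    have h2 : HasFDerivAt (fun y : ℂ × ℂ => y.1 - (n + 1) * y.2) (M n) y := (M n).hasFDerivAt
    exact ((hasDerivAt_piCot hp).comp_hasFDerivAt y h1).add
      ((hasDerivAt_piCot hm).comp_hasFDerivAt y h2)
  have hnn (n : ℕ) : ‖(n : ℂ) + 1‖ = (n : ℝ) + 1 := by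
    rw [← Nat.cast_succ, Complex.norm_natCast, Nat.cast_succ]
  have hfs : ‖ContinuousLinearMap.fst ℂ ℂ ℂ‖ ≤ 1 := ContinuousLinearMap.norm_fst_le ..
  have hsn : ‖ContinuousLinearMap.snd ℂ ℂ ℂ‖ ≤ 1 := ContinuousLinearMap.norm_snd_le ..
  have hsm (n : ℕ) : ‖((n : ℂ) + 1) • ContinuousLinearMap.snd ℂ ℂ ℂ‖ ≤ (n : ℝ) + 1 := by
    rw [norm_smul, hnn]
    exact mul_le_of_le_one_right (by positivity) hsn
  have hP (n : ℕ) : ‖P n‖ ≤ 2 * ((n : ℝ) + 1) := by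
    have := (norm_add_le _ _).trans (add_le_add hfs (hsm n))
    have hn : (0 : ℝ) ≤ n := n.cast_nonneg
    exact this.trans (by linarith)
  have hM (n : ℕ) : ‖M n‖ ≤ 2 * ((n : ℝ) + 1) := by
    have := (norm_sub_le _ _).trans (add_le_add hfs (hsm n))
    have hn : (0 : ℝ) ≤ n := n.cast_nonneg
    exact this.trans (by linarith)
  obtain ⟨h, hS⟩ := hasFDerivAt_tsum_of_eventually_bound (f := cotPair) (f' := F') (N := N)
    (summable_succ_mul_geometric hr hr1 (64 * Real.pi ^ 2 * C)) hU hUc.isPreconnected hxU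
    (fun n => hderiv n x (hreg n).1 (hreg n).2)
    (fun n hn y hy => hderiv n y
      (ne_intCast_of_im_ne_zero (by linarith [(H n hn y hy).1]))
      (ne_intCast_of_im_ne_zero (by linarith [(H n hn y hy).2.1])))
    (fun n hn y hy => by
      obtain ⟨h1, h2, h3, h4⟩ := H n hn y hy
      have a := (norm_piCotDeriv_le_of_one_le_im h1).trans
        (mul_le_mul_of_nonneg_left h3 (by positivity))
      have b := (norm_piCotDeriv_le_of_im_le_neg_one h2).trans
        (mul_le_mul_of_nonneg_left h4 (by positivity))
      refine (norm_add_le _ _).trans ?_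
      rw [norm_smul, norm_smul]
      have := add_le_add (mul_le_mul a (hP n) (norm_nonneg _) (by positivity))
        (mul_le_mul b (hM n) (norm_nonneg _) (by positivity))
      refine this.trans (le_of_eq ?_)
      ring)
    (summable_cotPair x hx)
  refine h.congr_fderiv ?_
  refine ContinuousLinearMap.ext fun v => ?_
  have hv : v = v.1 • ((1, 0) : ℂ × ℂ) + v.2 • ((0, 1) : ℂ × ℂ) := by ext <;> simp
  have e1 : (∑' n, F' n x) (1, 0) = eisTailDz x := by
    refine ((ContinuousLinearMap.apply ℂ ℂ ((1, 0) : ℂ × ℂ)).map_tsum hS).trans ?_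
    refine tsum_congr fun n => ?_
    simp [F', P, M]
  have e2 : (∑' n, F' n x) (0, 1) = eisTailDtau x := by
    refine ((ContinuousLinearMap.apply ℂ ℂ ((0, 1) : ℂ × ℂ)).map_tsum hS).trans ?_
    refine tsum_congr fun n => ?_
    simp [F', P, M]
    ring
  conv_lhs => rw [hv, map_add, map_smul, map_smul, e1, e2]
  simp [mul_comm]

/-- `eisTailDtau` is holomorphic in `z`. -/
lemma differentiableAt_eisTailDtau {τ z : ℂ} (hτ : 0 < τ.im) (hreg : TailRegular (z, τ)) :
    DifferentiableAt ℂ (fun z => eisTailDtau (z, τ)) z := by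
  obtain ⟨U, hU, -, hxU, N, C, r, hC, hr, hr1, H⟩ := exists_uniform_tail (z, τ) hτ
  let f (n : ℕ) (z : ℂ) : ℂ :=
    (n + 1) * (piCotDeriv (z + (n + 1) * τ) - piCotDeriv (z - (n + 1) * τ))
  have hd (n : ℕ) (y : ℂ) (hp : ∀ m : ℤ, y + (n + 1) * τ ≠ m)
      (hm : ∀ m : ℤ, y - (n + 1) * τ ≠ m) : DifferentiableAt ℂ (f n) y := by
    have h1 := (differentiableAt_piCotDeriv hp).comp y
      (f := fun y : ℂ => y + (n + 1) * τ) (by fun_prop)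
    have h2 := (differentiableAt_piCotDeriv hm).comp y
      (f := fun y : ℂ => y - (n + 1) * τ) (by fun_prop)
    exact (h1.sub h2).const_mul _
  set W : Set ℂ := {y | (y, τ) ∈ U} with hW
  have hWo : IsOpen W := hU.preimage (by fun_prop : Continuous fun y : ℂ => (y, τ))
  have hu := summable_succ_mul_geometric hr hr1 (32 * Real.pi ^ 2 * C)
  have hb (n : ℕ) (hn : N ≤ n) (y : ℂ) (hy : y ∈ W) :
      ‖f n y‖ ≤ 32 * Real.pi ^ 2 * C * (((n : ℝ) + 1) * r ^ n) := by
    obtain ⟨h1, h2, h3, h4⟩ := H n hn (y, τ) hy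
    have a := (norm_piCotDeriv_le_of_one_le_im h1).trans
      (mul_le_mul_of_nonneg_left h3 (by positivity))
    have b := (norm_piCotDeriv_le_of_im_le_neg_one h2).trans
      (mul_le_mul_of_nonneg_left h4 (by positivity))
    have c := (norm_sub_le _ _).trans (add_le_add a b)
    have hnn : ‖(n : ℂ) + 1‖ = (n : ℝ) + 1 := by
      rw [← Nat.cast_succ, Complex.norm_natCast, Nat.cast_succ]
    rw [norm_mul, hnn]
    refine (mul_le_mul_of_nonneg_left c (by positivity : (0 : ℝ) ≤ n + 1)).trans (le_of_eq ?_)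
    ring
  have hu' := (summable_nat_add_iff N).2 hu
  have htail : DifferentiableAt ℂ (fun y => ∑' n, f (n + N) y) z := by
    refine (differentiableOn_tsum_of_summable_norm hu' (fun n y hy => ?_) hWo
      (fun n y hy => hb (n + N) (by omega) y hy)).differentiableAt (hWo.mem_nhds hxU)
    obtain ⟨h1, h2, -, -⟩ := H (n + N) (by omega) (y, τ) hy
    exact (hd _ _ (ne_intCast_of_im_ne_zero (by linarith))
      (ne_intCast_of_im_ne_zero (by linarith))).differentiableWithinAt
  have hfin : DifferentiableAt ℂ (fun y => ∑ n ∈ Finset.range N, f n y) z :=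
    DifferentiableAt.fun_sum fun n _ => hd n z (hreg n).1 (hreg n).2
  refine (hfin.add htail).congr_of_eventuallyEq ?_
  filter_upwards [hWo.mem_nhds hxU] with y hy
  have hs : Summable fun n => f (n + N) y :=
    Summable.of_norm_bounded hu' fun n => hb (n + N) (by omega) y hy
  exact (((summable_nat_add_iff (f := fun n => f n y) N).1 hs).sum_add_tsum_nat_add N).symm

/-- Liouville's theorem for elliptic functions: a function with two independent periods, holomorphic
off the lattice and with a removable singularity at `0`, is constant off the lattice. -/
lemma PeriodPair.eq_of_periodic (L : PeriodPair) {f g : ℂ → ℂ}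
    (h₁ : ∀ z ∉ L.lattice, f (z + L.ω₁) = f z) (h₂ : ∀ z ∉ L.lattice, f (z + L.ω₂) = f z)
    (hd : ∀ z ∉ L.lattice, DifferentiableAt ℂ f z) (hg : AnalyticAt ℂ g 0)
    (hfg : f =ᶠ[𝓝[≠] 0] g) {z : ℂ} (hz : z ∉ L.lattice) : f z = g 0 := by
  classical
  set F : ℂ → ℂ := fun z => if z ∈ L.lattice then g 0 else f z with hF
  have hFper {ω : ℂ} (hω : ω ∈ L.lattice) (h : ∀ z ∉ L.lattice, f (z + ω) = f z) :
      Function.Periodic F ω := by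
    intro z
    by_cases hz : z ∈ L.lattice
    · simp [hF, hz, add_mem hz hω]
    · have : z + ω ∉ L.lattice := fun h' => hz (by simpa using sub_mem h' hω)
      simp [hF, hz, this, h z hz]
  have hper : ∀ l ∈ L.lattice, Function.Periodic F l := by
    intro l hl
    obtain ⟨m, n, rfl⟩ := PeriodPair.mem_lattice.1 hl
    exact ((hFper L.ω₁_mem_lattice h₁).int_mul m).add_period
      ((hFper L.ω₂_mem_lattice h₂).int_mul n)
  have hF0 : DifferentiableAt ℂ F 0 := by
    refine hg.differentiableAt.congr_of_eventuallyEq ?_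
    have hnear := L.compl_lattice_sdiff_singleton_mem_nhds 0
    filter_upwards [hnear, eventually_nhdsWithin_iff.1 hfg] with w hw hw'
    by_cases h0 : w = 0
    · simp [hF, h0]
    · have : w ∉ L.lattice := fun h => hw ⟨h, h0⟩
      simp only [hF, this, if_false]
      exact hw' h0
  have hdiff : Differentiable ℂ F := by
    intro w
    by_cases hw : w ∈ L.lattice
    · have e : F = fun x => F (x - w) := by
        ext x
        simpa using hper w hw (x - w)
      rw [e]
      have : DifferentiableAt ℂ F (w - w) := by simpa using hF0
      exact DifferentiableAt.comp w (f := fun x => x - w) this (by fun_prop)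
    · refine (hd w hw).congr_of_eventuallyEq ?_
      filter_upwards [L.isClosed_lattice.isOpen_compl.mem_nhds hw] with x hx
      simp only [hF]
      exact if_neg hx
  have hb := (IsZLattice.isCompact_range_of_periodic L.lattice F hdiff.continuous
    fun z w hw => hper w hw z).isBounded
  have := hdiff.apply_eq_apply_of_bounded hb z 0
  simpa [hF, hz] using this

/-- The periods `1, τ`. -/
def tauPair (τ : ℂ) (hτ : 0 < τ.im) : PeriodPair where
  ω₁ := 1
  ω₂ := τ
  indep := by
    rw [LinearIndependent.pair_iff]
    intro s t h
    have h2 := congrArg Complex.im h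
    have h1 := congrArg Complex.re h
    simp at h1 h2
    have ht : t = 0 := h2.resolve_right hτ.ne'
    exact ⟨by simpa [ht] using h1, ht⟩

lemma mem_tauPair_lattice {τ : ℂ} (hτ : 0 < τ.im) {z : ℂ} :
    z ∈ (tauPair τ hτ).lattice ↔ InLattice τ z := by
  rw [PeriodPair.mem_lattice, InLattice]
  simp only [tauPair, mul_one]
  exact exists_congr fun m => exists_congr fun n => eq_comm

lemma wp_eq_weierstrassP {τ : ℂ} (hτ : 0 < τ.im) : wp τ = (tauPair τ hτ).weierstrassP := by
  ext z
  have h0 := (tauPair τ hτ).weierstrassPExcept_add 0 z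
  rw [← h0, wp, add_comm]
  congr 1
  · rw [PeriodPair.weierstrassPExcept, ← (tauPair τ hτ).latticeEquivProd.symm.toEquiv.tsum_eq]
    have := tsum_subtype {w : ℤ × ℤ | w ≠ 0} fun w =>
      ((z - ((w.1 : ℂ) + (w.2 : ℂ) * τ))⁻¹ ^ 2 - ((w.1 : ℂ) + (w.2 : ℂ) * τ)⁻¹ ^ 2)
    refine this.trans (tsum_congr fun w => ?_)
    have hc : ((tauPair τ hτ).latticeEquivProd.symm w : ℂ) = w.1 + w.2 * τ := by
      rw [PeriodPair.latticeEquiv_symm_apply]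
      simp [tauPair]
    have hw : (((tauPair τ hτ).latticeEquivProd.symm w : ℂ) = 0) ↔ w = 0 := by
      rw [ZeroMemClass.coe_eq_zero, LinearEquiv.map_eq_zero_iff]
    by_cases h : w = 0
    · simp [h]
    · have : (((tauPair τ hτ).latticeEquivProd.symm w : ℂ) ≠ 0) := fun h' => h (hw.1 h')
      simp [h]
      simp [hc]
  · simp

lemma isOpen_notInLattice {τ : ℂ} (hτ : 0 < τ.im) : IsOpen {z | ¬ InLattice τ z} := by
  have := (tauPair τ hτ).isClosed_lattice.isOpen_compl
  convert! this using 1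
  ext z
  simp [mem_tauPair_lattice]

lemma isPreconnected_notInLattice (τ : ℂ) : IsPreconnected {z | ¬ InLattice τ z} := by
  have hc : {z | InLattice τ z}.Countable := by
    have : {z | InLattice τ z} =
        Set.range fun w : ℤ × ℤ => (w.1 : ℂ) + (w.2 : ℂ) * τ := by
      ext z
      constructor
      · rintro ⟨m, n, rfl⟩
        exact ⟨(m, n), rfl⟩
      · rintro ⟨w, rfl⟩
        exact ⟨w.1, w.2, rfl⟩
    rw [this]
    exact Set.countable_range _
  exact (hc.isPathConnected_compl_of_one_lt_rank
    (by rw [Complex.rank_real_complex]; exact Nat.one_lt_ofNat)).isConnected.isPreconnected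

lemma differentiableAt_wp {τ : ℂ} (hτ : 0 < τ.im) {z : ℂ} (hz : ¬ InLattice τ z) :
    DifferentiableAt ℂ (wp τ) z := by
  rw [wp_eq_weierstrassP hτ]
  refine (tauPair τ hτ).differentiableOn_weierstrassP.differentiableAt
    ((tauPair τ hτ).isClosed_lattice.isOpen_compl.mem_nhds ?_)
  rwa [← mem_tauPair_lattice hτ] at hz

lemma wp_add_of_inLattice {τ : ℂ} (hτ : 0 < τ.im) (z : ℂ) {l : ℂ} (hl : InLattice τ l) :
    wp τ (z + l) = wp τ z := by
  rw [wp_eq_weierstrassP hτ]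
  exact (tauPair τ hτ).weierstrassP_add_coe z ⟨l, (mem_tauPair_lattice hτ).2 hl⟩

lemma exists_analyticAt_wp {τ : ℂ} (hτ : 0 < τ.im) :
    ∃ h : ℂ → ℂ, AnalyticAt ℂ h 0 ∧ ∀ z, wp τ z = 1 / z ^ 2 + h z := by
  refine ⟨(tauPair τ hτ).weierstrassPExcept 0, (tauPair τ hτ).analyticAt_weierstrassPExcept 0,
    fun z => ?_⟩
  rw [wp_eq_weierstrassP hτ, ← (tauPair τ hτ).weierstrassPExcept_add 0 z]
  simp [add_comm]

lemma inLattice_add_iff {τ z l : ℂ} (hl : InLattice τ l) :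
    InLattice τ (z + l) ↔ InLattice τ z := by
  obtain ⟨m, n, rfl⟩ := hl
  constructor
  · rintro ⟨a, b, h⟩
    exact ⟨a - m, b - n, by push_cast; linear_combination h⟩
  · rintro ⟨a, b, rfl⟩
    exact ⟨a + m, b + n, by push_cast; ring⟩

lemma inLattice_neg_iff {τ z : ℂ} : InLattice τ (-z) ↔ InLattice τ z := by
  constructor
  · rintro ⟨a, b, h⟩
    exact ⟨-a, -b, by push_cast; linear_combination -h⟩
  · rintro ⟨a, b, rfl⟩
    exact ⟨-a, -b, by push_cast; ring⟩

lemma inLattice_one (τ : ℂ) : InLattice τ 1 := ⟨1, 0, by simp⟩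

lemma inLattice_tau (τ : ℂ) : InLattice τ τ := ⟨0, 1, by simp⟩

lemma inLattice_of_double {τ z : ℂ} (h : InLattice τ z) : InLattice τ (2 * z) := by
  obtain ⟨a, b, rfl⟩ := h
  exact ⟨2 * a, 2 * b, by push_cast; ring⟩

lemma inLattice_halfp (τ : ℂ) (k : Fin 4) : InLattice τ (halfp τ k) := by
  fin_cases k
  · exact ⟨0, 0, by simp [halfp]⟩
  · exact ⟨1, 0, by simp [halfp]⟩
  · exact ⟨0, 1, by simp [halfp]⟩
  · exact ⟨1, 1, by simp [halfp]⟩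

lemma not_inLattice_add_halfp {τ z : ℂ} (h : ¬ InLattice τ (2 * z)) (k : Fin 4) :
    ¬ InLattice τ (z + halfp τ k / 2) := by
  intro h'
  have := inLattice_of_double h'
  rw [show 2 * (z + halfp τ k / 2) = 2 * z + halfp τ k by ring,
    inLattice_add_iff (inLattice_halfp τ k)] at this
  exact h this

lemma not_inLattice_halfp_div_two {τ : ℂ} (hτ : 0 < τ.im) {k : Fin 4} (hk : k ≠ 0) :
    ¬ InLattice τ (halfp τ k / 2) := by
  rintro ⟨a, b, h⟩
  have him := congrArg Complex.im h
  have hre := congrArg Complex.re h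
  have hb (c : ℤ) (hc : (c : ℝ) * τ.im / 2 = b * τ.im) : c = 2 * b := by
    have : ((c : ℝ) - 2 * b) * τ.im = 0 := by linarith
    have := (mul_eq_zero.1 this).resolve_right hτ.ne'
    have : (c : ℝ) = ((2 * b : ℤ) : ℝ) := by push_cast; linarith
    exact_mod_cast this
  fin_cases k
  · exact hk rfl
  · simp [halfp] at him hre
    have b0 : b = 0 := him.resolve_right hτ.ne'
    have : ((2 * a : ℤ) : ℝ) = ((1 : ℤ) : ℝ) := by
      push_cast
      rw [b0] at hre
      norm_num at hre
      linarith
    have := Int.cast_injective this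
    omega
  · simp [halfp] at him
    have := hb 1 (by push_cast; linarith)
    omega
  · simp [halfp] at him
    have := hb 1 (by push_cast; linarith)
    omega

/-- The derivative of the duplication formula `∑ ℘(z + ω_k / 2) = 4 ℘(2z)`. -/
lemma sum_wpd_add_halfp {τ : ℂ} (hτ : 0 < τ.im) {z : ℂ} (hz : ¬ InLattice τ (2 * z)) :
    ∑ k : Fin 4, wpd τ (z + halfp τ k / 2) = 8 * wpd τ (2 * z) := by
  set f : ℂ → ℂ := fun u => ∑ k : Fin 4, wp τ (u / 2 + halfp τ k / 2) - 4 * wp τ u with hf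
  have hder (u : ℂ) (hu : ¬ InLattice τ u) : HasDerivAt f
      (∑ k : Fin 4, wpd τ (u / 2 + halfp τ k / 2) * (1 / 2) - 4 * wpd τ u) u := by
    refine (HasDerivAt.fun_sum fun k _ => ?_).sub
      ((differentiableAt_wp hτ hu).hasDerivAt.const_mul 4)
    have h1 : HasDerivAt (fun u : ℂ => u / 2 + halfp τ k / 2) (1 / 2) u :=
      ((hasDerivAt_id u).div_const 2).add_const _
    have hu' : ¬ InLattice τ (2 * (u / 2)) := by rwa [mul_div_cancel₀ u two_ne_zero]
    exact ((differentiableAt_wp hτ (not_inLattice_add_halfp hu' k)).hasDerivAt).comp u h1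
  obtain ⟨h, hh, hwp⟩ := exists_analyticAt_wp hτ
  have hconst : ∃ c, ∀ u, ¬ InLattice τ u → f u = c := by
    set g : ℂ → ℂ := fun u => h (u / 2) +
      (wp τ (u / 2 + 1 / 2) + wp τ (u / 2 + τ / 2) + wp τ (u / 2 + (1 + τ) / 2)) - 4 * h u with hg
    have hw {c : ℂ} (hc : ¬ InLattice τ c) : AnalyticAt ℂ (fun u => wp τ (u / 2 + c)) 0 := by
      have h1 : AnalyticAt ℂ (wp τ) (0 / 2 + c) := by
        rw [Complex.analyticAt_iff_eventually_differentiableAt, zero_div, zero_add]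
        filter_upwards [(isOpen_notInLattice hτ).mem_nhds hc] with w hw
        exact differentiableAt_wp hτ hw
      exact h1.fun_comp_of_eq (by fun_prop) rfl
    have hga : AnalyticAt ℂ g 0 := by
      have a1 := hw (not_inLattice_halfp_div_two hτ (k := 1) (by decide))
      have a2 := hw (not_inLattice_halfp_div_two hτ (k := 2) (by decide))
      have a3 := hw (not_inLattice_halfp_div_two hτ (k := 3) (by decide))
      have a0 : AnalyticAt ℂ (fun u => h (u / 2)) 0 :=
        AnalyticAt.fun_comp_of_eq hh (by fun_prop) (by simp)
      exact (a0.add ((a1.add a2).add a3)).sub (analyticAt_const.mul hh)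
    refine ⟨g 0, fun u hu => (tauPair τ hτ).eq_of_periodic (f := f) ?_ ?_ ?_ hga ?_
      (by rwa [mem_tauPair_lattice])⟩
    · intro w _
      have e1 : wp τ ((w + 1) / 2 + 1 / 2) = wp τ (w / 2) := by
        rw [← wp_add_of_inLattice hτ (w / 2) (inLattice_one τ)]; congr 1; ring
      have e2 : wp τ ((w + 1) / 2 + (1 + τ) / 2) = wp τ (w / 2 + τ / 2) := by
        rw [← wp_add_of_inLattice hτ (w / 2 + τ / 2) (inLattice_one τ)]; congr 1; ring
      have e3 : (w + 1) / 2 = w / 2 + 1 / 2 := by ring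
      have e4 : (w + 1) / 2 + τ / 2 = w / 2 + (1 + τ) / 2 := by ring
      change f (w + 1) = f w
      simp only [hf, Fin.sum_univ_four]
      simp [halfp] at e1 e2 e3 e4 ⊢
      rw [e1, e2, e4, e3, wp_add_of_inLattice hτ w (inLattice_one τ)]
      ring
    · intro w _
      have e1 : wp τ ((w + τ) / 2 + τ / 2) = wp τ (w / 2) := by
        rw [← wp_add_of_inLattice hτ (w / 2) (inLattice_tau τ)]; congr 1; ring
      have e2 : wp τ ((w + τ) / 2 + (1 + τ) / 2) = wp τ (w / 2 + 1 / 2) := by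
        rw [← wp_add_of_inLattice hτ (w / 2 + 1 / 2) (inLattice_tau τ)]; congr 1; ring
      have e3 : (w + τ) / 2 = w / 2 + τ / 2 := by ring
      have e4 : (w + τ) / 2 + 1 / 2 = w / 2 + (1 + τ) / 2 := by ring
      change f (w + τ) = f w
      simp only [hf, Fin.sum_univ_four]
      simp [halfp] at e1 e2 e3 e4 ⊢
      rw [e1, e2, e4, e3, wp_add_of_inLattice hτ w (inLattice_tau τ)]
      ring
    · intro w hw
      rw [mem_tauPair_lattice] at hw
      exact (hder w hw).differentiableAt
    · filter_upwards [self_mem_nhdsWithin] with w hw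
      have hw : w ≠ 0 := hw
      simp only [hf, hg, Fin.sum_univ_four]
      simp [halfp]
      rw [hwp (w / 2), hwp w]
      field_simp
      ring
  obtain ⟨c, hc⟩ := hconst
  have h1 := hder (2 * z) hz
  have h2 : HasDerivAt f 0 (2 * z) := by
    refine (hasDerivAt_const (2 * z) c).congr_of_eventuallyEq ?_
    filter_upwards [(isOpen_notInLattice hτ).mem_nhds hz] with w hw
    exact hc w hw
  have h3 := h1.unique h2
  rw [mul_div_cancel_left₀ z two_ne_zero, ← Finset.sum_mul] at h3
  linear_combination 2 * h3

lemma not_intCast_of_not_inLattice {τ z : ℂ} (hz : ¬ InLattice τ z) (m : ℤ) : z ≠ m :=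
  fun h => hz ⟨m, 0, by simp [h]⟩

lemma tailRegular_of_not_inLattice {τ z : ℂ} (hz : ¬ InLattice τ z) : TailRegular (z, τ) := by
  refine fun n => ⟨fun m h => hz ⟨m, -(n + 1), ?_⟩, fun m h => hz ⟨m, n + 1, ?_⟩⟩
  · push_cast
    linear_combination h
  · push_cast
    linear_combination h

lemma tailRegular_of_abs_im_lt {τ z : ℂ} (hz : |z.im| < τ.im) : TailRegular (z, τ) := by
  obtain ⟨h1, h2⟩ := abs_lt.1 hz
  have h0 : 0 < τ.im := (abs_nonneg _).trans_lt hz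
  refine fun n => ⟨ne_intCast_of_im_ne_zero ?_, ne_intCast_of_im_ne_zero ?_⟩
  · have : 0 < (z + (n + 1) * τ).im := by
      simp
      nlinarith [mul_nonneg (Nat.cast_nonneg (α := ℝ) n) h0.le]
    exact this.ne'
  · have : (z - (n + 1) * τ).im < 0 := by
      simp
      nlinarith [mul_nonneg (Nat.cast_nonneg (α := ℝ) n) h0.le]
    exact this.ne

lemma eventually_tailRegular {τ : ℂ} (hτ : 0 < τ.im) : ∀ᶠ z in 𝓝 (0 : ℂ), TailRegular (z, τ) := by
  have : ContinuousAt (fun z : ℂ => |z.im|) 0 := by fun_prop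
  filter_upwards [this.eventually_lt_const (by simpa using hτ)] with z hz
  exact tailRegular_of_abs_im_lt hz

lemma eisCot_neg (τ z : ℂ) : eisCot τ (-z) = -eisCot τ z := by
  simp only [eisCot, eisTail, piCot_neg, neg_add, ← tsum_neg]
  congr 1
  refine tsum_congr fun n => ?_
  simp only [cotPair]
  rw [← neg_add', piCot_neg, neg_add_eq_sub, ← neg_sub, piCot_neg]
  ring

lemma eisCot_add_one (τ z : ℂ) : eisCot τ (z + 1) = eisCot τ z := by
  simp only [eisCot, eisTail, cotPair, piCot_add_one, add_right_comm z 1, add_sub_right_comm z 1]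

lemma tendsto_piCot_add_nat_mul {τ : ℂ} (hτ : 0 < τ.im) (z : ℂ) :
    Tendsto (fun n : ℕ => piCot (z + n * τ)) atTop (𝓝 (-(Real.pi * I))) := by
  have him : Tendsto (fun n : ℕ => (z + n * τ).im) atTop atTop := by
    have : (fun n : ℕ => (z + n * τ).im) = fun n : ℕ => z.im + n * τ.im := by
      ext n
      simp
    rw [this]
    exact tendsto_atTop_add_const_left _ _ (tendsto_natCast_atTop_atTop.atTop_mul_const hτ)
  rw [tendsto_iff_norm_sub_tendsto_zero]
  have hlim : Tendsto (fun n : ℕ => 4 * Real.pi * Real.exp (-(2 * Real.pi * (z + n * τ).im)))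
      atTop (𝓝 0) := by
    have := (Real.tendsto_exp_neg_atTop_nhds_zero.comp
      (him.const_mul_atTop Real.two_pi_pos)).const_mul (4 * Real.pi)
    simpa using this
  refine squeeze_zero' (Eventually.of_forall fun _ => norm_nonneg _) ?_ hlim
  filter_upwards [him.eventually_ge_atTop 1] with n hn
  simpa using norm_piCot_add_pi_I_le hn

lemma eisCot_add_tau {τ : ℂ} (hτ : 0 < τ.im) (z : ℂ) :
    eisCot τ (z + τ) = eisCot τ z - 2 * Real.pi * I := by
  have hS (w : ℂ) := (summable_cotPair (w, τ) hτ).hasSum.tendsto_sum_nat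
  have htel (N : ℕ) : (∑ n ∈ Finset.range N, cotPair n (z + τ, τ)) -
      ∑ n ∈ Finset.range N, cotPair n (z, τ) =
      piCot (z + (N + 1 : ℕ) * τ) - piCot (z + τ) + piCot z + piCot (-z + N * τ) := by
    rw [show -z + N * τ = -(z - N * τ) by ring, piCot_neg]
    induction N with
    | zero => simp
    | succ N ih =>
      rw [Finset.sum_range_succ, Finset.sum_range_succ]
      have e1 : z + τ + (N + 1) * τ = z + ((N + 1 + 1 : ℕ) : ℂ) * τ := by push_cast; ring
      have e2 : z + τ - (N + 1) * τ = z - N * τ := by ring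
      have e3 : z + (N + 1) * τ = z + ((N + 1 : ℕ) : ℂ) * τ := by push_cast; ring
      have e4 : z - (N + 1) * τ = z - ((N + 1 : ℕ) : ℂ) * τ := by push_cast; ring
      have c1 : cotPair N (z + τ, τ) = piCot (z + (N + 1 + 1 : ℕ) * τ) + piCot (z - N * τ) := by
        simp only [cotPair, e1, e2]
      have c2 : cotPair N (z, τ) = piCot (z + (N + 1 : ℕ) * τ) + piCot (z - (N + 1 : ℕ) * τ) := by
        simp only [cotPair, e3, e4]
      linear_combination ih + c1 - c2
  have hlim := (((tendsto_add_atTop_iff_nat 1).2 (tendsto_piCot_add_nat_mul hτ z)).sub_const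
    (piCot (z + τ))).add_const (piCot z) |>.add (tendsto_piCot_add_nat_mul hτ (-z))
  have h := tendsto_nhds_unique (((hS (z + τ)).sub (hS z)).congr htel) hlim
  simp only [eisCot, eisTail]
  linear_combination h

/-- The joint derivative of `eisCot` in both variables. -/
lemma hasFDerivAt_eisCot {τ z : ℂ} (hτ : 0 < τ.im) (hz : ¬ InLattice τ z) :
    HasFDerivAt (fun x : ℂ × ℂ => eisCot x.2 x.1)
      (deriv (eisCot τ) z • ContinuousLinearMap.fst ℂ ℂ ℂ +
        eisTailDtau (z, τ) • ContinuousLinearMap.snd ℂ ℂ ℂ) (z, τ) := by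
  have h1 : HasFDerivAt (fun x : ℂ × ℂ => piCot x.1)
      (piCotDeriv z • ContinuousLinearMap.fst ℂ ℂ ℂ) (z, τ) :=
    HasDerivAt.comp_hasFDerivAt (h₂ := piCot) (f := Prod.fst) (z, τ)
      (hasDerivAt_piCot (not_intCast_of_not_inLattice hz)) hasFDerivAt_fst
  have h2 := h1.add (hasFDerivAt_eisTail (x := (z, τ)) hτ (tailRegular_of_not_inLattice hz))
  have h3 : HasDerivAt (eisCot τ) (piCotDeriv z + eisTailDz (z, τ)) z := by
    have := h2.comp_hasDerivAt z ((hasDerivAt_id z).prodMk (hasDerivAt_const z τ))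
    simpa using! this
  rw [h3.deriv]
  refine h2.congr_fderiv ?_
  ext <;> simp

lemma hasDerivAt_eisCot_comp {f g : ℂ → ℂ} {f' g' t : ℂ} (hf : HasDerivAt f f' t)
    (hg : HasDerivAt g g' t) (hτ : 0 < (g t).im) (hz : ¬ InLattice (g t) (f t)) :
    HasDerivAt (fun s => eisCot (g s) (f s))
      (deriv (eisCot (g t)) (f t) * f' + eisTailDtau (f t, g t) * g') t := by
  have := (hasFDerivAt_eisCot hτ hz).comp_hasDerivAt t (hf.prodMk hg)
  simpa using! this

lemma differentiableAt_eisCot {τ z : ℂ} (hτ : 0 < τ.im) (hz : ¬ InLattice τ z) :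
    DifferentiableAt ℂ (eisCot τ) z :=
  (hasDerivAt_eisCot_comp (hasDerivAt_id z) (hasDerivAt_const z τ) hτ hz).differentiableAt

lemma differentiableOn_eisCot {τ : ℂ} (hτ : 0 < τ.im) :
    DifferentiableOn ℂ (eisCot τ) {z | ¬ InLattice τ z} :=
  fun _ hz => (differentiableAt_eisCot hτ hz).differentiableWithinAt

lemma deriv_eisCot_add_one (τ z : ℂ) : deriv (eisCot τ) (z + 1) = deriv (eisCot τ) z := by
  rw [← deriv_comp_add_const]
  simp only [eisCot_add_one]

lemma deriv_eisCot_add_tau {τ : ℂ} (hτ : 0 < τ.im) (z : ℂ) :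
    deriv (eisCot τ) (z + τ) = deriv (eisCot τ) z := by
  rw [← deriv_comp_add_const]
  simp only [eisCot_add_tau hτ, deriv_sub_const]

lemma deriv_eisCot_neg (τ z : ℂ) : deriv (eisCot τ) (-z) = deriv (eisCot τ) z := by
  have := deriv_comp_neg (eisCot τ) z
  simp only [eisCot_neg, deriv.fun_neg] at this
  linear_combination this

lemma eisTailDtau_add_one (τ z : ℂ) : eisTailDtau (z + 1, τ) = eisTailDtau (z, τ) := by
  simp only [eisTailDtau, add_right_comm z 1, add_sub_right_comm z 1, piCotDeriv_add_one]

lemma eisTailDtau_neg (τ z : ℂ) : eisTailDtau (-z, τ) = -eisTailDtau (z, τ) := by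
  simp only [eisTailDtau, ← tsum_neg]
  refine tsum_congr fun n => ?_
  rw [← neg_add', piCotDeriv_neg, show -z + (n + 1) * τ = -(z - (n + 1) * τ) by ring,
    piCotDeriv_neg]
  ring

lemma eisTailDtau_add_tau {τ z : ℂ} (hτ : 0 < τ.im) (hz : ¬ InLattice τ z) :
    eisTailDtau (z + τ, τ) = eisTailDtau (z, τ) - deriv (eisCot τ) z := by
  have hz' : ¬ InLattice τ (z + τ) := by rwa [inLattice_add_iff (inLattice_tau τ)]
  have h1 := hasDerivAt_eisCot_comp ((hasDerivAt_id τ).const_add z) (hasDerivAt_id τ) hτ hz'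
  have h2 := (hasDerivAt_eisCot_comp (hasDerivAt_const τ z) (hasDerivAt_id τ) hτ hz).sub_const
    (2 * Real.pi * I)
  have h3 := h1.congr_of_eventuallyEq (f₁ := fun t => eisCot t z - 2 * Real.pi * I) (by
    filter_upwards [(isOpen_lt continuous_const Complex.continuous_im).mem_nhds hτ] with t ht
    exact (eisCot_add_tau ht z).symm)
  have := h3.unique h2
  simp only [id, mul_one, mul_zero, zero_add] at this
  rw [deriv_eisCot_add_tau hτ] at this
  linear_combination this

/-- The Laurent expansion of `eisCot` at the origin. -/
lemma exists_analyticAt_eisCot {τ : ℂ} (hτ : 0 < τ.im) :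
    ∃ h : ℂ → ℂ, AnalyticAt ℂ h 0 ∧ h 0 = 0 ∧ eisCot τ =ᶠ[𝓝[≠] 0] fun z => z⁻¹ + h z := by
  obtain ⟨h₀, hh₀, hcot⟩ := exists_analyticAt_piCot
  have htail : AnalyticAt ℂ (fun z => eisTail (z, τ)) 0 := by
    rw [Complex.analyticAt_iff_eventually_differentiableAt]
    filter_upwards [eventually_tailRegular hτ] with z hz
    exact (hasFDerivAt_eisTail (x := (z, τ)) hτ hz).differentiableAt.comp z
      (f := fun z => (z, τ)) (by fun_prop)
  have hh := hh₀.add htail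
  set h := h₀ + fun z => eisTail (z, τ)
  have heq : eisCot τ =ᶠ[𝓝[≠] 0] fun z => z⁻¹ + h z := by
    filter_upwards [hcot] with z hz
    simp only [eisCot, hz, h, Pi.add_apply]
    ring
  refine ⟨h, hh, ?_, heq⟩
  have hneg : Tendsto (fun z : ℂ => -z) (𝓝[≠] 0) (𝓝[≠] 0) := by
    refine tendsto_nhdsWithin_iff.2 ⟨?_, ?_⟩
    · have : Tendsto (fun z : ℂ => -z) (𝓝 0) (𝓝 (-0)) := continuous_neg.tendsto 0
      rw [neg_zero] at this
      exact this.mono_left nhdsWithin_le_nhds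
    · filter_upwards [self_mem_nhdsWithin] with z hz
      simpa using hz
  have hc : Tendsto h (𝓝[≠] 0) (𝓝 (h 0)) := hh.continuousAt.tendsto.mono_left nhdsWithin_le_nhds
  have hodd : (fun z => h (-z)) =ᶠ[𝓝[≠] 0] fun z => -h z := by
    filter_upwards [heq, hneg.eventually heq] with z h1 h2
    rw [eisCot_neg, h1, inv_neg] at h2
    linear_combination -h2
  have := tendsto_nhds_unique ((hc.comp hneg).congr' hodd) hc.neg
  exact self_eq_neg.1 this

lemma eventually_deriv_eq_of_eq_inv_add {f h : ℂ → ℂ} (hh : AnalyticAt ℂ h 0)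
    (hf : f =ᶠ[𝓝[≠] 0] fun z => z⁻¹ + h z) :
    deriv f =ᶠ[𝓝[≠] 0] fun z => -(z ^ 2)⁻¹ + deriv h z := by
  filter_upwards [hf.nhdsNE_deriv, hh.eventually_analyticAt.filter_mono nhdsWithin_le_nhds,
    self_mem_nhdsWithin] with z h1 h2 h3
  rw [h1]
  exact ((hasDerivAt_inv h3).add h2.differentiableAt.hasDerivAt).deriv

lemma eventually_deriv_deriv_eq_of_eq_inv_add {f h : ℂ → ℂ} (hh : AnalyticAt ℂ h 0)
    (hf : f =ᶠ[𝓝[≠] 0] fun z => z⁻¹ + h z) :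
    deriv (deriv f) =ᶠ[𝓝[≠] 0] fun z => 2 * (z ^ 3)⁻¹ + deriv (deriv h) z := by
  filter_upwards [(eventually_deriv_eq_of_eq_inv_add hh hf).nhdsNE_deriv,
    hh.deriv.eventually_analyticAt.filter_mono nhdsWithin_le_nhds,
    self_mem_nhdsWithin] with z h1 h2 h3
  have h3 : z ≠ 0 := h3
  rw [h1]
  have h4 : HasDerivAt (fun z : ℂ => -(z ^ 2)⁻¹) (2 * (z ^ 3)⁻¹) z := by
    refine ((hasDerivAt_pow 2 z).fun_inv (pow_ne_zero 2 h3)).fun_neg.congr_deriv ?_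
    field_simp
    simp [mul_comm]
  exact (h4.add h2.differentiableAt.hasDerivAt).deriv

lemma one_half_not_inLattice {τ : ℂ} (hτ : 0 < τ.im) : ¬ InLattice τ (1 / 2) := by
  simpa [halfp] using not_inLattice_halfp_div_two hτ (k := 1) (by decide)

/-- The heat equation for the logarithmic derivative of the odd theta function. -/
lemma eisCot_heat {τ z : ℂ} (hτ : 0 < τ.im) (hz : ¬ InLattice τ z) :
    4 * Real.pi * I * eisTailDtau (z, τ) =
      deriv (deriv (eisCot τ)) z + 2 * eisCot τ z * deriv (eisCot τ) z := by
  set D : ℂ → ℂ := fun z => 4 * Real.pi * I * eisTailDtau (z, τ) -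
    deriv (deriv (eisCot τ)) z - 2 * eisCot τ z * deriv (eisCot τ) z with hD
  have hdd_one (z : ℂ) : deriv (deriv (eisCot τ)) (z + 1) = deriv (deriv (eisCot τ)) z := by
    rw [← deriv_comp_add_const]
    simp only [deriv_eisCot_add_one]
  have hdd_tau (z : ℂ) : deriv (deriv (eisCot τ)) (z + τ) = deriv (deriv (eisCot τ)) z := by
    rw [← deriv_comp_add_const]
    simp only [deriv_eisCot_add_tau hτ]
  have hdd_neg (z : ℂ) : deriv (deriv (eisCot τ)) (-z) = -deriv (deriv (eisCot τ)) z := by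
    have := deriv_comp_neg (deriv (eisCot τ)) z
    simp only [deriv_eisCot_neg] at this
    rw [← neg_eq_iff_eq_neg]
    exact this.symm
  have hD_one (z : ℂ) : D (z + 1) = D z := by
    simp only [hD, eisTailDtau_add_one, hdd_one, eisCot_add_one, deriv_eisCot_add_one]
  obtain ⟨c, hc⟩ : ∃ c, ∀ z, ¬ InLattice τ z → D z = c := by
    obtain ⟨h, hh, h0, heq⟩ := exists_analyticAt_eisCot hτ
    have hq : AnalyticAt ℂ (dslope h 0) 0 := by
      obtain ⟨p, hp⟩ := hh
      exact ⟨_, hp.has_fpower_series_dslope_fslope⟩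
    have hhq (z : ℂ) : h z = z * dslope h 0 z := by
      simpa [h0] using (sub_smul_dslope h 0 z).symm
    have hB : AnalyticAt ℂ (fun z => eisTailDtau (z, τ)) 0 := by
      rw [Complex.analyticAt_iff_eventually_differentiableAt]
      filter_upwards [eventually_tailRegular hτ] with z hz
      exact differentiableAt_eisTailDtau hτ hz
    set g : ℂ → ℂ := fun z => 4 * Real.pi * I * eisTailDtau (z, τ) - deriv (deriv h) z -
      2 * deriv (dslope h 0) z - 2 * h z * deriv h z with hg
    have hga : AnalyticAt ℂ g 0 :=
      (((analyticAt_const.mul hB).sub hh.deriv.deriv).sub (analyticAt_const.mul hq.deriv)).sub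
        ((analyticAt_const.mul hh).mul hh.deriv)
    refine ⟨g 0, fun z hz => (tauPair τ hτ).eq_of_periodic (fun w _ => hD_one w) ?_ ?_ hga ?_
      (by rwa [mem_tauPair_lattice])⟩
    · intro w hw
      rw [mem_tauPair_lattice] at hw
      change D (w + τ) = D w
      simp only [hD, eisTailDtau_add_tau hτ hw, hdd_tau, eisCot_add_tau hτ, deriv_eisCot_add_tau hτ]
      ring
    · intro w hw
      rw [mem_tauPair_lattice] at hw
      have hO := isOpen_notInLattice hτ
      have d0 := differentiableOn_eisCot hτ
      have d1 := (d0.deriv hO).differentiableAt (hO.mem_nhds hw)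
      have d2 := ((d0.deriv hO).deriv hO).differentiableAt (hO.mem_nhds hw)
      have dB := differentiableAt_eisTailDtau hτ (tailRegular_of_not_inLattice hw)
      exact ((dB.const_mul _).sub d2).sub
        (((differentiableAt_eisCot hτ hw).const_mul 2).mul d1)
    · filter_upwards [heq, eventually_deriv_eq_of_eq_inv_add hh heq,
        eventually_deriv_deriv_eq_of_eq_inv_add hh heq, self_mem_nhdsWithin,
        hq.eventually_analyticAt.filter_mono nhdsWithin_le_nhds] with w e0 e1 e2 hw hqw
      have hw : w ≠ 0 := hw
      have hder : deriv h w = dslope h 0 w + w * deriv (dslope h 0) w := by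
        have := ((hasDerivAt_id w).mul hqw.differentiableAt.hasDerivAt).congr_of_eventuallyEq
          (Eventually.of_forall hhq)
        simpa using this.deriv
      simp only [hD, hg, e0, e1, e2]
      rw [hder, hhq w]
      field_simp
      ring
  have hhalf := one_half_not_inLattice hτ
  have hodd : D (-(1 / 2)) = -D (1 / 2) := by
    simp only [hD, eisTailDtau_neg, hdd_neg, eisCot_neg, deriv_eisCot_neg]
    ring
  have hper := hD_one (-(1 / 2))
  rw [hodd, show -(1 / 2) + 1 = (1 / 2 : ℂ) by norm_num, hc _ hhalf] at hper
  have hDz := hc z hz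
  rw [self_eq_neg.1 hper] at hDz
  simp only [hD] at hDz
  linear_combination hDz

/-- `eisCot` has derivative `-℘` up to an additive constant. -/
lemma exists_deriv_eisCot_add_wp {τ : ℂ} (hτ : 0 < τ.im) :
    ∃ c, ∀ z, ¬ InLattice τ z → deriv (eisCot τ) z + wp τ z = c := by
  obtain ⟨h, hh, -, heq⟩ := exists_analyticAt_eisCot hτ
  obtain ⟨k, hk, hwp⟩ := exists_analyticAt_wp hτ
  refine ⟨(deriv h + k) 0, fun z hz => (tauPair τ hτ).eq_of_periodic
    (f := fun z => deriv (eisCot τ) z + wp τ z) (fun w _ => ?_) (fun w _ => ?_) (fun w hw => ?_)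
    (hh.deriv.add hk) ?_ (by rwa [mem_tauPair_lattice])⟩
  · change deriv (eisCot τ) (w + 1) + wp τ (w + 1) = _
    rw [deriv_eisCot_add_one, wp_add_of_inLattice hτ w (inLattice_one τ)]
  · change deriv (eisCot τ) (w + τ) + wp τ (w + τ) = _
    rw [deriv_eisCot_add_tau hτ, wp_add_of_inLattice hτ w (inLattice_tau τ)]
  · rw [mem_tauPair_lattice] at hw
    have hO := isOpen_notInLattice hτ
    exact (((differentiableOn_eisCot hτ).deriv hO).differentiableAt (hO.mem_nhds hw)).add
      (differentiableAt_wp hτ hw)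
  · filter_upwards [eventually_deriv_eq_of_eq_inv_add hh heq] with w hw
    rw [hw, hwp, one_div, Pi.add_apply]
    ring

/-- The Weierstrass zeta function in terms of `eisCot`. -/
lemma zeta_eq_eisCot_add {zeta : ℂ → ℂ → ℂ} {eta1 : ℂ → ℂ} (hzeta : IsWeierstrassZeta zeta)
    (heta1 : IsEta1 zeta eta1) {τ z : ℂ} (hτ : 0 < τ.im) (hz : ¬ InLattice τ z) :
    zeta τ z = eisCot τ z + z * eta1 τ ∧ deriv (eisCot τ) z = -wp τ z - eta1 τ := by
  obtain ⟨hodd, hder, -⟩ := hzeta τ hτ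
  obtain ⟨c, hc⟩ := exists_deriv_eisCot_add_wp hτ
  have hd (w : ℂ) (hw : ¬ InLattice τ w) :
      HasDerivAt (fun w => zeta τ w - eisCot τ w + w * c) 0 w := by
    refine (((hder w hw).sub (differentiableAt_eisCot hτ hw).hasDerivAt).add
      ((hasDerivAt_id w).mul_const c)).congr_deriv ?_
    linear_combination -hc w hw
  obtain ⟨a, ha⟩ := (isOpen_notInLattice hτ).exists_is_const_of_deriv_eq_zero
    (isPreconnected_notInLattice τ)
    (fun w hw => (hd w hw).differentiableAt.differentiableWithinAt) fun w hw => (hd w hw).deriv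
  have hz1 : ¬ InLattice τ (z + 1) := by rwa [inLattice_add_iff (inLattice_one τ)]
  have a1 := ha z hz
  have a2 := ha (-z) (by rwa [Set.mem_ofPred_eq, inLattice_neg_iff])
  have a3 := ha (z + 1) hz1
  simp only [hodd, eisCot_neg, eisCot_add_one] at a1 a2 a3
  have hη := heta1 τ hτ z hz
  have hce : c = -eta1 τ := by linear_combination a3 - a1 + hη
  have ha0 : a = 0 := by linear_combination (-(a1 + a2)) / 2
  refine ⟨?_, ?_⟩
  · rw [ha0, hce] at a1
    linear_combination a1
  · linear_combination hc z hz + hce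

/-- Theorem 4.1, converse direction: a solution of the elliptic form of
Painlevé VI with `α_k = (1/2)(n_k + 1/2)²`, together with
`A(τ) = 2πi p′(τ) + (1/2)(ζ(2p|τ) - 2p η₁(τ))`, solves the Hamiltonian system. -/
theorem elliptic_PVI_implies_hamiltonian_system
    (n : Fin 4 → ℂ) (zeta : ℂ → ℂ → ℂ) (eta1 : ℂ → ℂ)
    (hzeta : IsWeierstrassZeta zeta) (heta1 : IsEta1 zeta eta1)
    (V : Set ℂ) (hVopen : IsOpen V) (hVconn : IsConnected V)
    (hVH : ∀ τ ∈ V, 0 < τ.im)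
    (p : ℂ → ℂ) (hpdiff : DifferentiableOn ℂ p V)
    (hreg : ∀ τ ∈ V, ¬ InLattice τ (2 * p τ) ∧
      ∀ k : Fin 4, ¬ InLattice τ (p τ + halfp τ k / 2))
    (hell : ∀ τ ∈ V, HasDerivAt (deriv p)
      ((-1 / (4 * (Real.pi : ℂ) ^ 2)) *
        ∑ k : Fin 4, (1 / 2) * (n k + 1 / 2) ^ 2 * wpd τ (p τ + halfp τ k / 2)) τ)
    (A : ℂ → ℂ)
    (hA : ∀ τ, A τ = 2 * (Real.pi : ℂ) * Complex.I * deriv p τ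
      + (1 / 2) * (zeta τ (2 * p τ) - 2 * p τ * eta1 τ)) :
    HamSystem n zeta eta1 V p A := by
  intro τ hτV
  have hτ := hVH τ hτV
  have hz := (hreg τ hτV).1
  have hπ : (Real.pi : ℂ) ≠ 0 := Complex.ofReal_ne_zero.2 Real.pi_ne_zero
  have hp := (hpdiff.differentiableAt (hVopen.mem_nhds hτV)).hasDerivAt
  refine ⟨hp.congr_deriv ?_, ?_⟩
  · rw [hA]
    field_simp
    linear_combination (4 * deriv p τ * Real.pi) * Complex.I_sq
  have hAeq : A =ᶠ[𝓝 τ] fun t =>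
      2 * (Real.pi : ℂ) * I * deriv p t + 1 / 2 * eisCot t (2 * p t) := by
    filter_upwards [hVopen.mem_nhds hτV] with t ht
    rw [hA, (zeta_eq_eisCot_add hzeta heta1 (hVH t ht) (hreg t ht).1).1]
    ring
  have hderiv := ((hell τ hτV).const_mul (2 * (Real.pi : ℂ) * I)).add
    ((hasDerivAt_eisCot_comp (hp.const_mul 2) (hasDerivAt_id τ) hτ hz).const_mul (1 / 2))
  refine (hderiv.congr_of_eventuallyEq hAeq).congr_deriv ?_
  have hZ' := (zeta_eq_eisCot_add hzeta heta1 hτ hz).2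
  have hZ'' : deriv (deriv (eisCot τ)) (2 * p τ) = -wpd τ (2 * p τ) := by
    have : deriv (eisCot τ) =ᶠ[𝓝 (2 * p τ)] fun w => -wp τ w - eta1 τ := by
      filter_upwards [(isOpen_notInLattice hτ).mem_nhds hz] with w hw
      exact (zeta_eq_eisCot_add hzeta heta1 hτ hw).2
    rw [this.deriv_eq, deriv_sub_const, deriv.fun_neg, wpd]
  have hheat := eisCot_heat hτ hz
  rw [hZ', hZ''] at hheat
  have hB : eisTailDtau (2 * p τ, τ) = I / (4 * Real.pi) *
      (wpd τ (2 * p τ) + 2 * eisCot τ (2 * p τ) * (wp τ (2 * p τ) + eta1 τ)) := by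
    field_simp
    linear_combination (-I) * hheat + 4 * Real.pi * eisTailDtau (2 * p τ, τ) * Complex.I_sq
  have hsum := sum_wpd_add_halfp hτ hz
  simp only [id, hZ', hB, hAeq.self_of_nhds]
  simp only [Fin.sum_univ_four] at hsum ⊢
  generalize wpd τ (p τ + halfp τ 0 / 2) = P₀, wpd τ (p τ + halfp τ 1 / 2) = P₁,
    wpd τ (p τ + halfp τ 2 / 2) = P₂, wpd τ (p τ + halfp τ 3 / 2) = P₃ at hsum ⊢
  field_simp
  linear_combination (-I) * hsum -
    16 * Real.pi * (wp τ (2 * p τ) + eta1 τ) * deriv p τ * Complex.I_sq
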